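/- For every n ≥ 1, (n+1)^(n−1) = Σ over compositions I = (i₁,…,i_r) of n of [ n!/(i₁!⋯i_r!) · ∏_{k=1}^{r} (i_k − 1)^(i_k − 1) ], with the convention 0^0 = 1. -/

import Mathlib

open Finset

/-- The composition obtained by prepending a block of size `i + 1`. -/
def Composition.consSucc {n : ℕ} (i : Fin (n + 1)) (c : Composition (n - i)) :
    Composition (n + 1) where
  blocks := (i + 1 : ℕ) :: c.blocks
  blocks_pos := by
    intro j hj
    rcases List.mem_cons.1 hj with rfl | h
    · omega
    · exact c.blocks_pos h
  blocks_sum := by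
    simp only [List.sum_cons, c.blocks_sum]
    omega

theorem Composition.consSucc_bijective (n : ℕ) : Function.Bijective
    fun p : (i : Fin (n + 1)) × Composition (n - i) => Composition.consSucc p.1 p.2 := by
  constructor
  · rintro ⟨i, c⟩ ⟨j, d⟩ h
    have h' := congrArg Composition.blocks h
    simp only [Composition.consSucc, List.cons.injEq, add_left_inj] at h'
    obtain ⟨hij, hcd⟩ := h'
    obtain rfl := Fin.ext hij
    obtain rfl := Composition.ext hcd
    rfl
  · intro c
    obtain ⟨blocks, pos, sum⟩ := c
    cases blocks with
    | nil => simp at sum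
    | cons a l =>
      have ha : 0 < a := pos (by simp)
      simp only [List.sum_cons] at sum
      refine ⟨⟨⟨a - 1, by omega⟩, ⟨l, fun h => pos (by simp [h]), by simp; omega⟩⟩, ?_⟩
      ext1
      simp [Composition.consSucc, Nat.sub_add_cancel ha]

theorem Composition.sum_prod_map_blocks_succ {R : Type*} [CommSemiring R] (f : ℕ → R) (n : ℕ) :
    ∑ c : Composition (n + 1), (c.blocks.map f).prod =
      ∑ i ∈ range (n + 1), f (i + 1) * ∑ c : Composition (n - i), (c.blocks.map f).prod := by
  rw [← (Composition.consSucc_bijective n).sum_comp, Fintype.sum_sigma, sum_range]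
  simp [Composition.consSucc, mul_sum]

theorem List.prod_map_factorial_dvd_factorial_sum (l : List ℕ) :
    (l.map Nat.factorial).prod ∣ l.sum.factorial := by
  induction l with
  | nil => simp
  | cons a l ih =>
    simp only [List.map_cons, List.prod_cons, List.sum_cons]
    exact (mul_dvd_mul_left _ ih).trans (Nat.factorial_mul_factorial_dvd_factorial_add _ _)

open Polynomial in
/-- Abel binomial identity, specialised to first parameter one. -/
theorem abel_identity (n : ℕ) :
    ∑ j ∈ range (n + 1), C (n.choose j * (j + 1 : ℚ) ^ (j - 1)) * (X - C (j : ℚ)) ^ (n - j) =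
      (X + 1) ^ n := by
  induction n with
  | zero => simp
  | succ n ih =>
    rw [← sub_eq_zero]
    set p := ∑ j ∈ range (n + 1 + 1),
      C (((n + 1).choose j : ℚ) * (j + 1 : ℚ) ^ (j - 1)) * (X - C (j : ℚ)) ^ (n + 1 - j) -
        (X + 1) ^ (n + 1) with hp
    have hderiv : derivative p = 0 := by
      rw [hp, derivative_sub, derivative_sum, sum_range_succ]
      have hlast : derivative (C (((n + 1).choose (n + 1) : ℚ) * ((n + 1 : ℕ) + 1 : ℚ) ^ (n + 1 - 1))
          * (X - C ((n + 1 : ℕ) : ℚ)) ^ (n + 1 - (n + 1))) = 0 := by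
        rw [Nat.sub_self, pow_zero, mul_one, derivative_C]
      have hpow : derivative ((X + 1 : ℚ[X]) ^ (n + 1)) = C (n + 1 : ℚ) * (X + 1) ^ n := by
        simp [derivative_pow]
      rw [hlast, add_zero, hpow, ← ih, mul_sum, sub_eq_zero]
      refine sum_congr rfl fun j _ => ?_
      have hc : ((n + 1).choose j : ℚ) * (n + 1 - j : ℕ) = (n + 1) * n.choose j := by
        exact_mod_cast (Nat.choose_mul_succ_eq n j).symm.trans (mul_comm _ _)
      rw [derivative_C_mul, derivative_X_sub_C_pow, ← mul_assoc, ← mul_assoc, ← C_mul, ← C_mul,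
        show n + 1 - j - 1 = n - j by omega, mul_right_comm, hc, mul_assoc]
    have heval : p.eval (-1) = 0 := by
      have h := congrFun (fwdDiff_iter_pow_eq_zero_of_lt (R := ℚ) (Nat.lt_succ_self n)) 1
      rw [fwdDiff_iter_eq_sum_shift] at h
      rw [hp, eval_sub, eval_finsetSum]
      simp only [eval_mul, eval_C, eval_pow, eval_sub, eval_X, eval_add, eval_one]
      rw [neg_add_cancel, zero_pow n.succ_ne_zero, sub_zero]
      refine Eq.trans (sum_congr rfl fun j hj => ?_) h
      have hj' : j ≤ n + 1 := Nat.lt_succ_iff.1 (mem_range.1 hj)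
      have hpow : (j + 1 : ℚ) ^ (j - 1) * (j + 1) ^ (n + 1 - j) = (j + 1) ^ n := by
        rcases j with _ | j
        · simp
        · rw [← pow_add]
          congr 1
          omega
      rw [show (-1 - j : ℚ) = -1 * (j + 1) by ring, mul_pow, zsmul_eq_mul, nsmul_one,
        add_comm (1 : ℚ), ← hpow]
      push_cast
      ring
    have hc := eq_C_of_derivative_eq_zero hderiv
    rw [hc, eval_C] at heval
    rw [hc, heval, C_0]

theorem sum_choose_mul_pow_mul_pow (n : ℕ) :
    ∑ j ∈ range (n + 1), ((n + 1).choose j : ℚ) * (j + 1) ^ (j - 1) * (n - j) ^ (n - j) =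
      (n + 2) ^ n := by
  have h₁ := congrArg (Polynomial.eval (n : ℚ)) (abel_identity n)
  have h₂ := congrArg (Polynomial.eval (n : ℚ)) (abel_identity (n + 1))
  simp only [Polynomial.eval_finsetSum, Polynomial.eval_mul, Polynomial.eval_C,
    Polynomial.eval_pow, Polynomial.eval_sub, Polynomial.eval_X, Polynomial.eval_add,
    Polynomial.eval_one] at h₁ h₂
  rw [sum_range_succ, Nat.sub_self, pow_zero, mul_one, Nat.choose_self, Nat.add_sub_cancel] at h₂
  have h : ∀ j ∈ range (n + 1),
      ((n + 1).choose j : ℚ) * (j + 1) ^ (j - 1) * (n - j) ^ (n - j) =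
        (n + 1) * (n.choose j * (j + 1) ^ (j - 1) * (n - j) ^ (n - j)) -
          (n + 1).choose j * (j + 1) ^ (j - 1) * (n - j) ^ (n + 1 - j) := by
    intro j hj
    have hj' : j ≤ n := Nat.lt_succ_iff.1 (mem_range.1 hj)
    have hc : (n.choose j : ℚ) * (n + 1) = (n + 1).choose j * (n + 1 - j) := by
      have := congrArg (Nat.cast (R := ℚ)) (Nat.choose_mul_succ_eq n j)
      rw [Nat.cast_mul, Nat.cast_mul, Nat.cast_sub (by omega)] at this
      exact_mod_cast this
    rw [Nat.succ_sub hj', pow_succ]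
    linear_combination (-(j + 1 : ℚ) ^ (j - 1) * (n - j) ^ (n - j)) * hc
  rw [sum_congr rfl h, sum_sub_distrib, ← mul_sum, h₁]
  push_cast at h₂
  linear_combination -h₂

theorem sum_composition_prod_pow_div_factorial (n : ℕ) :
    ∑ c : Composition n,
        (c.blocks.map fun i => ((i - 1 : ℕ) : ℚ) ^ (i - 1) / i.factorial).prod =
      (n + 1) ^ (n - 1) / n.factorial := by
  induction n using Nat.strong_induction_on with
  | _ n ih =>
    rcases n with _ | n
    · simp [(Composition.blocks_eq_nil _).2, composition_card]
    · rw [Composition.sum_prod_map_blocks_succ, ← sum_range_reflect, Nat.add_sub_cancel]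
      have h := sum_choose_mul_pow_mul_pow n
      rw [Nat.cast_add_one, show (n + 1 + 1 : ℚ) = n + 2 by ring, ← h, sum_div]
      refine sum_congr rfl fun j hj => ?_
      have hj' : j ≤ n := Nat.lt_succ_iff.1 (mem_range.1 hj)
      rw [Nat.sub_sub_self hj', ih j (by omega),
        Nat.add_sub_cancel, Nat.cast_sub hj', Nat.cast_choose ℚ (by omega : j ≤ n + 1),
        Nat.succ_sub hj']
      have := Nat.factorial_ne_zero
      field_simp

theorem sum_over_compositions_eq (n : ℕ) (hn : 1 ≤ n) :
    (n + 1) ^ (n - 1) =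
      ∑ I : Composition n,
        (Nat.factorial n / (I.blocks.map Nat.factorial).prod) *
          (I.blocks.map fun i => (i - 1) ^ (i - 1)).prod := by
  suffices h : (((n + 1) ^ (n - 1) : ℕ) : ℚ) = _ from Nat.cast_injective h
  have hfact : (n.factorial : ℚ) ≠ 0 := Nat.cast_ne_zero.2 n.factorial_ne_zero
  rw [← mul_div_cancel_left₀ (((n + 1) ^ (n - 1) : ℕ) : ℚ) hfact, mul_div_assoc]
  push_cast
  rw [← sum_composition_prod_pow_div_factorial, mul_sum]
  refine sum_congr rfl fun I _ => ?_
  have hdvd := List.prod_map_factorial_dvd_factorial_sum I.blocks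
  rw [I.blocks_sum] at hdvd
  have hne : ((I.blocks.map Nat.factorial).prod : ℚ) ≠ 0 := by
    simp [List.prod_eq_zero_iff, Nat.factorial_ne_zero]
  rw [Nat.cast_div hdvd hne]
  have hdiv := Multiset.prod_map_div (m := (I.blocks : Multiset ℕ))
    (f := fun i => ((i - 1 : ℕ) : ℚ) ^ (i - 1)) (g := fun i => (i.factorial : ℚ))
  simp only [Multiset.map_coe, Multiset.prod_coe] at hdiv
  rw [hdiv]
  simp only [Nat.cast_list_prod, List.map_map, Function.comp_def, Nat.cast_pow]
  ring
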